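/- Let A be an n×n complex matrix with Ind(A) = k and suppose A = U · [[T, S], [0, N]] · U*, where U is unitary, T is an invertible r×r matrix with r = rank(A^k), and N^k = 0. Write U* G U = [[G₁, G₂], [G₃, G₄]] with G₁ of size r×r and assume G₁ is invertible (so A has an m-core-EP inverse). Let B be an n×n complex matrix with A ≤Ⓔ B, and write U* B U = [[Q, Z], [M, P]] with Q of size r×r. Then Q = T, M = 0, and Z = S − G₁⁻¹ G₂ P + G₁⁻¹ G₂ N. -/

import Mathlib

/-! Conjugation by `U` turns `A` into the block triangular matrix `[[T,S],[0,N]]`, whose `k`-th power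
has zero bottom rows since `N ^ k = 0`. As `X` factors through `A ^ k`, its conjugate has the shape
`[[X₁,X₂],[0,0]]`; the equation `X A^(k+1) = A^k` forces `X₁ T = 1`, so `A X` becomes `[[1,W],[0,0]]`
with `W = T X₂`. Because `G² = 1`, the Minkowski self-adjointness of `A X` reads
`(A X)ᴴ G = G (A X)`, and its top-right block gives `G₁ W = G₂`. Comparing blocks in `A X = B X`
then yields `Q = T` and `M = 0`, and the top-right block of `X A = X B`, multiplied by `T`, is
`S + W N = Z + W P`. The lemma `block_core` is this computation for matrices indexed by a sum type.
-/

open Matrix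

noncomputable section

/-- The Minkowski metric matrix `G = diag(1, -1, …, -1)`. -/
def mink (n : ℕ) : Matrix (Fin n) (Fin n) ℂ :=
  Matrix.diagonal (fun i => if (i : ℕ) = 0 then 1 else -1)

/-- The Minkowski adjoint `A~ = G A* G`. -/
def madj {n : ℕ} (A : Matrix (Fin n) (Fin n) ℂ) : Matrix (Fin n) (Fin n) ℂ :=
  mink n * Aᴴ * mink n

/-- `k` is the index of `A`: the smallest positive integer with
`rank (A^(k+1)) = rank (A^k)`. -/
def IsInd {n : ℕ} (A : Matrix (Fin n) (Fin n) ℂ) (k : ℕ) : Prop :=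
  0 < k ∧ (A ^ (k + 1)).rank = (A ^ k).rank ∧
    ∀ j, 0 < j → (A ^ (j + 1)).rank = (A ^ j).rank → k ≤ j

/-- `X` is an m-core-EP inverse of `A` (with `Ind(A) = k`). -/
def IsMCoreEP {n : ℕ} (A X : Matrix (Fin n) (Fin n) ℂ) (k : ℕ) : Prop :=
  X * A * X = X ∧ X * A ^ (k + 1) = A ^ k ∧ madj (A * X) = A * X ∧
    ∃ Z : Matrix (Fin n) (Fin n) ℂ, X = A ^ k * Z

/-- The m-core-EP order `A ≤Ⓔ B` (for `A` with `Ind(A) = k`): the m-core-EP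
inverse `X` of `A` exists and satisfies `X A = X B` and `A X = B X`. -/
def MCoreEPLE {n : ℕ} (A B : Matrix (Fin n) (Fin n) ℂ) (k : ℕ) : Prop :=
  ∃ X, IsMCoreEP A X k ∧ X * A = X * B ∧ A * X = B * X

/-- Regard a 2×2 block matrix with blocks of sizes `r` and `n - r` as an
`n × n` matrix (given `r ≤ n`). -/
def embedBlocks {n r : ℕ} (hr : r ≤ n)
    (M : Matrix (Fin r ⊕ Fin (n - r)) (Fin r ⊕ Fin (n - r)) ℂ) :
    Matrix (Fin n) (Fin n) ℂ :=
  Matrix.reindex (finSumFinEquiv.trans (finCongr (Nat.add_sub_cancel' hr)))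
    (finSumFinEquiv.trans (finCongr (Nat.add_sub_cancel' hr))) M

theorem mink_mul_self (n : ℕ) : mink n * mink n = 1 := by
  unfold mink
  rw [Matrix.diagonal_mul_diagonal, ← Matrix.diagonal_one]
  congr 1
  funext i
  split_ifs <;> norm_num

theorem embedBlocks_mul {n r : ℕ} (hr : r ≤ n)
    (M N : Matrix (Fin r ⊕ Fin (n - r)) (Fin r ⊕ Fin (n - r)) ℂ) :
    embedBlocks hr (M * N) = embedBlocks hr M * embedBlocks hr N := by
  simp only [embedBlocks, Matrix.reindex_apply, Matrix.submatrix_mul_equiv]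

theorem embedBlocks_pow {n r : ℕ} (hr : r ≤ n)
    (M : Matrix (Fin r ⊕ Fin (n - r)) (Fin r ⊕ Fin (n - r)) ℂ) (k : ℕ) :
    embedBlocks hr (M ^ k) = embedBlocks hr M ^ k := by
  induction k with
  | zero => simp only [embedBlocks, pow_zero, Matrix.reindex_apply, Matrix.submatrix_one_equiv]
  | succ k ih => rw [pow_succ, pow_succ, embedBlocks_mul, ih]

theorem embedBlocks_conjTranspose {n r : ℕ} (hr : r ≤ n)
    (M : Matrix (Fin r ⊕ Fin (n - r)) (Fin r ⊕ Fin (n - r)) ℂ) :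
    embedBlocks hr Mᴴ = (embedBlocks hr M)ᴴ := by
  simp [embedBlocks]

theorem embedBlocks_bijective {n r : ℕ} (hr : r ≤ n) : Function.Bijective (embedBlocks hr) :=
  (Matrix.reindex _ _).bijective

theorem exists_fromBlocks_pow {m p : Type*} [Fintype m] [Fintype p] [DecidableEq m]
    [DecidableEq p] (T : Matrix m m ℂ) (S : Matrix m p ℂ) (N : Matrix p p ℂ) (k : ℕ) :
    ∃ R, Matrix.fromBlocks T S 0 N ^ k = Matrix.fromBlocks (T ^ k) R 0 (N ^ k) := by
  induction k with
  | zero => exact ⟨0, by simp⟩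
  | succ k ih =>
    obtain ⟨R, hR⟩ := ih
    exact ⟨T ^ k * S + R * N, by simp [pow_succ, hR, Matrix.fromBlocks_multiply]⟩

/-- The block comparison after conjugation by `U`: here `H = [[G₁,G₂],[G₃,G₄]]` plays the role of
`Uᴴ G U`, and `X` that of the conjugated m-core-EP inverse. -/
theorem block_core {m p : Type*} [Fintype m] [Fintype p] [DecidableEq m] [DecidableEq p]
    (k : ℕ) (T G₁ Q : Matrix m m ℂ) (S G₂ Z : Matrix m p ℂ) (G₃ M : Matrix p m ℂ)
    (N G₄ P : Matrix p p ℂ) (X Y : Matrix (m ⊕ p) (m ⊕ p) ℂ)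
    (hT : IsUnit T) (hG₁ : IsUnit G₁) (hN : N ^ k = 0)
    (hX : X = Matrix.fromBlocks T S 0 N ^ k * Y)
    (hXA : X * Matrix.fromBlocks T S 0 N ^ (k + 1) = Matrix.fromBlocks T S 0 N ^ k)
    (hadj : (Matrix.fromBlocks T S 0 N * X)ᴴ * Matrix.fromBlocks G₁ G₂ G₃ G₄ =
      Matrix.fromBlocks G₁ G₂ G₃ G₄ * (Matrix.fromBlocks T S 0 N * X))
    (hl : X * Matrix.fromBlocks T S 0 N = X * Matrix.fromBlocks Q Z M P)
    (hr : Matrix.fromBlocks T S 0 N * X = Matrix.fromBlocks Q Z M P * X) :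
    Q = T ∧ M = 0 ∧ Z = S - G₁⁻¹ * G₂ * P + G₁⁻¹ * G₂ * N := by
  obtain ⟨R, hR⟩ := exists_fromBlocks_pow T S N k
  obtain ⟨R', hR'⟩ := exists_fromBlocks_pow T S N (k + 1)
  obtain ⟨X₁, X₂, rfl⟩ : ∃ X₁ X₂, X = Matrix.fromBlocks X₁ X₂ 0 0 := by
    rw [← Matrix.fromBlocks_toBlocks Y, hR, hN, Matrix.fromBlocks_multiply] at hX
    exact ⟨_, _, by simpa using hX⟩
  have hX₁ : X₁ * T = 1 := by
    rw [hR, hR', Matrix.fromBlocks_multiply, Matrix.fromBlocks_inj] at hXA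
    have h := hXA.1
    rw [Matrix.mul_zero, add_zero, pow_succ', ← mul_assoc] at h
    exact (hT.pow k).mul_right_cancel (h.trans (one_mul _).symm)
  have hX₁' : T * X₁ = 1 := mul_eq_one_comm.mp hX₁
  simp only [Matrix.fromBlocks_multiply, Matrix.fromBlocks_conjTranspose, Matrix.mul_zero,
    Matrix.zero_mul, add_zero, hX₁', hX₁, Matrix.fromBlocks_inj,
    Matrix.conjTranspose_one, Matrix.one_mul, Matrix.conjTranspose_zero] at hadj hl hr
  have hQ : Q = T := by
    calc Q = Q * (X₁ * T) := by rw [hX₁, mul_one]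
      _ = T := by rw [← mul_assoc, ← hr.1, one_mul]
  have hM : M = 0 := by
    calc M = M * X₁ * T := by rw [Matrix.mul_assoc, hX₁, Matrix.mul_one]
      _ = 0 := by rw [← hr.2.2.1, Matrix.zero_mul]
  have hW : G₁⁻¹ * G₂ = T * X₂ := by
    rw [hadj.2.1, ← Matrix.mul_assoc,
      Matrix.nonsing_inv_mul _ ((Matrix.isUnit_iff_isUnit_det _).mp hG₁), Matrix.one_mul]
  have hZ := congrArg (fun V => T * V) hl.2.1
  simp only [Matrix.mul_add, ← Matrix.mul_assoc, hX₁', Matrix.one_mul] at hZ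
  refine ⟨hQ, hM, ?_⟩
  rw [hW, sub_add_eq_add_sub, hZ, add_sub_cancel_right]

/-- If `A ≤Ⓔ B` with `A = U [[T,S],[0,N]] U*` and `U* B U = [[Q,Z],[M,P]]`,
then `Q = T`, `M = 0`, and `Z = S - G₁⁻¹G₂P + G₁⁻¹G₂N`. -/
theorem mCoreEPLE_block_structure {n r k : ℕ} (hr : r ≤ n)
    (A B U : Matrix (Fin n) (Fin n) ℂ) (hU : U ∈ Matrix.unitaryGroup (Fin n) ℂ)
    (T : Matrix (Fin r) (Fin r) ℂ) (S : Matrix (Fin r) (Fin (n - r)) ℂ)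
    (N : Matrix (Fin (n - r)) (Fin (n - r)) ℂ)
    (G₁ : Matrix (Fin r) (Fin r) ℂ) (G₂ : Matrix (Fin r) (Fin (n - r)) ℂ)
    (G₃ : Matrix (Fin (n - r)) (Fin r) ℂ) (G₄ : Matrix (Fin (n - r)) (Fin (n - r)) ℂ)
    (Q : Matrix (Fin r) (Fin r) ℂ) (Z : Matrix (Fin r) (Fin (n - r)) ℂ)
    (M : Matrix (Fin (n - r)) (Fin r) ℂ) (P : Matrix (Fin (n - r)) (Fin (n - r)) ℂ)
    (hInd : IsInd A k)
    (hA : A = U * embedBlocks hr (Matrix.fromBlocks T S 0 N) * Uᴴ)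
    (hT : IsUnit T) (hrk : (A ^ k).rank = r) (hN : N ^ k = 0)
    (hG : Uᴴ * mink n * U = embedBlocks hr (Matrix.fromBlocks G₁ G₂ G₃ G₄))
    (hG₁ : IsUnit G₁)
    (hB : Uᴴ * B * U = embedBlocks hr (Matrix.fromBlocks Q Z M P))
    (hle : MCoreEPLE A B k) :
    Q = T ∧ M = 0 ∧ Z = S - G₁⁻¹ * G₂ * P + G₁⁻¹ * G₂ * N := by
  obtain ⟨X, ⟨-, hXA, hadj, Y, hXY⟩, hl, hr'⟩ := hle
  have hUU : Uᴴ * U = 1 := Matrix.mem_unitaryGroup_iff'.mp hU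
  have hUU' : U * Uᴴ = 1 := Matrix.mem_unitaryGroup_iff.mp hU
  have conj_mul : ∀ C D, Uᴴ * (C * D) * U = (Uᴴ * C * U) * (Uᴴ * D * U) := fun C D => by
    calc Uᴴ * (C * D) * U = Uᴴ * C * 1 * (D * U) := by simp only [mul_assoc, one_mul]
      _ = _ := by rw [← hUU']; simp only [mul_assoc]
  have conj_pow : ∀ C (j : ℕ), Uᴴ * C ^ j * U = (Uᴴ * C * U) ^ j := fun C j => by
    induction j with
    | zero => simpa using hUU
    | succ j ih => rw [pow_succ, pow_succ, conj_mul, ih]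
  have conj_star : ∀ C, Uᴴ * Cᴴ * U = (Uᴴ * C * U)ᴴ := fun C => by
    simp [Matrix.conjTranspose_mul, mul_assoc]
  have hA' : Uᴴ * A * U = embedBlocks hr (Matrix.fromBlocks T S 0 N) := by
    calc Uᴴ * A * U = (Uᴴ * U) * embedBlocks hr (Matrix.fromBlocks T S 0 N) * (Uᴴ * U) := by
          rw [hA]; simp only [mul_assoc]
      _ = _ := by rw [hUU, one_mul, mul_one]
  -- Since `G` is an involution, `G (A X)ᴴ G = A X` is equivalent to `(A X)ᴴ G = G (A X)`.
  have hadj' : (A * X)ᴴ * mink n = mink n * (A * X) := by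
    have h := congrArg (fun V => mink n * V) hadj
    simpa only [madj, ← mul_assoc, mink_mul_self, one_mul] using h
  obtain ⟨X', hX'⟩ := (embedBlocks_bijective hr).2 (Uᴴ * X * U)
  obtain ⟨Y', hY'⟩ := (embedBlocks_bijective hr).2 (Uᴴ * Y * U)
  have inj := (embedBlocks_bijective hr).1
  refine block_core k T G₁ Q S G₂ Z G₃ M N G₄ P X' Y' hT hG₁ hN (inj ?_) (inj ?_) (inj ?_)
    (inj ?_) (inj ?_) <;>
  simp only [embedBlocks_mul, embedBlocks_pow, embedBlocks_conjTranspose, hX', hY', ← hA', ← hB,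
    ← hG, ← conj_mul, ← conj_pow, ← conj_star]
  · rw [hXY]
  · rw [hXA]
  · rw [hadj']
  · rw [hl]
  · rw [hr']
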